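/- Unsmoothed substate perturbation (construction step in the proof of the Substate Perturbation Lemma): Let X and B be finite nonempty types. Let σ_XB be a quantum state on X × B with marginal σ_B on B, let ψ_X be a quantum state on X, and let K > 0 be a real number with σ_XB ≤ K · (ψ_X ⊗ σ_B) in the Loewner order. Then for every quantum state ρ_B on B there exists a quantum state ρ'_XB on X × B such that: the marginal of ρ'_XB on B equals ρ_B, F(ρ'_XB, σ_XB) ≥ F(ρ_B, σ_B), and ρ'_XB ≤ 2K · (ψ_X ⊗ ρ_B) in the Loewner order. -/

import Mathlib

open Matrix
open scoped Kronecker Classical ComplexOrder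

noncomputable section

/-- A quantum state: a positive semidefinite complex matrix with trace 1. -/
def IsState {S : Type*} [Fintype S] [DecidableEq S] (ρ : Matrix S S ℂ) : Prop :=
  ρ.PosSemidef ∧ ρ.trace = 1

/-- The positive semidefinite square root (junk value `0` off the PSD matrices). -/
noncomputable def psdSqrt {S : Type*} [Fintype S] [DecidableEq S] (A : Matrix S S ℂ) :
    Matrix S S ℂ :=
  if h : A.PosSemidef then
    h.1.eigenvectorUnitary.1 * diagonal ((fun x : ℝ => (x : ℂ)) ∘ Real.sqrt ∘ h.1.eigenvalues) *
      (star h.1.eigenvectorUnitary : Matrix S S ℂ)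
  else 0

/-- Fidelity F(ρ,σ) = Tr √(√σ ρ √σ). -/
noncomputable def fidelity {S : Type*} [Fintype S] [DecidableEq S]
    (ρ σ : Matrix S S ℂ) : ℝ :=
  ((psdSqrt (psdSqrt σ * ρ * psdSqrt σ)).trace).re

/-- Marginal on the second factor (partial trace over the first factor). -/
noncomputable def margB {A B : Type*} [Fintype A] [Fintype B]
    (ρ : Matrix (A × B) (A × B) ℂ) : Matrix B B ℂ :=
  Matrix.of fun b b' => ∑ a, ρ (a, b) (a, b')

section SquareRoot

variable {S : Type*} [Fintype S] [DecidableEq S]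

theorem psdSqrt_posSemidef {A : Matrix S S ℂ} (hA : A.PosSemidef) : (psdSqrt A).PosSemidef := by
  rw [psdSqrt, dif_pos hA]
  refine PosSemidef.mul_mul_conjTranspose_same (PosSemidef.diagonal fun i => ?_) _
  simp

theorem psdSqrt_mul_self {A : Matrix S S ℂ} (hA : A.PosSemidef) : psdSqrt A * psdSqrt A = A := by
  have hU : (star hA.1.eigenvectorUnitary : Matrix S S ℂ) * hA.1.eigenvectorUnitary.1 = 1 :=
    Unitary.coe_star_mul_self _
  have hspec := hA.1.spectral_theorem
  rw [Unitary.conjStarAlgAut_apply] at hspec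
  rw [psdSqrt, dif_pos hA]
  conv_rhs => rw [hspec]
  simp only [Matrix.mul_assoc]
  rw [← Matrix.mul_assoc _ hA.1.eigenvectorUnitary.1, hU, Matrix.one_mul,
    ← Matrix.mul_assoc (diagonal _) (diagonal _), diagonal_mul_diagonal]
  congr 3
  ext i
  simp only [Function.comp_apply]
  rw [← Complex.ofReal_mul, Real.mul_self_sqrt (hA.eigenvalues_nonneg i)]
  rfl

/-- A positive semidefinite matrix has a positive semidefinite Moore–Penrose inverse commuting
with it. -/
theorem exists_posSemidef_pseudoinverse {A : Matrix S S ℂ} (hA : A.PosSemidef) :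
    ∃ J : Matrix S S ℂ, J.PosSemidef ∧ J * A = A * J ∧ A * J * A = A ∧ J * A * J = J := by
  have hU : (star hA.1.eigenvectorUnitary : Matrix S S ℂ) * hA.1.eigenvectorUnitary.1 = 1 :=
    Unitary.coe_star_mul_self _
  have hspec := hA.1.spectral_theorem
  rw [Unitary.conjStarAlgAut_apply] at hspec
  set U : Matrix S S ℂ := hA.1.eigenvectorUnitary.1
  set d : S → ℂ := RCLike.ofReal ∘ hA.1.eigenvalues
  have hd : 0 ≤ d⁻¹ := fun i => by
    have := hA.eigenvalues_nonneg i
    simp only [d, Pi.zero_apply, Pi.inv_apply, Function.comp_apply]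
    rw [← RCLike.ofReal_inv]
    exact RCLike.ofReal_nonneg.2 (inv_nonneg.2 this)
  have hmul : ∀ e f : S → ℂ, U * diagonal e * star U * (U * diagonal f * star U)
      = U * diagonal (e * f) * star U := fun e f => by
    simp only [Matrix.mul_assoc]
    rw [← Matrix.mul_assoc (star U) U, hU, Matrix.one_mul,
      ← Matrix.mul_assoc (diagonal e) (diagonal f), diagonal_mul_diagonal]
    rfl
  refine ⟨U * diagonal d⁻¹ * star U,
    (PosSemidef.diagonal hd).mul_mul_conjTranspose_same U, ?_, ?_, ?_⟩
  all_goals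
    rw [hspec]
    simp only [hmul]
    congr 3
    ext i
    rcases eq_or_ne (d i) 0 with h | h <;> simp [h]

theorem trace_mul_nonneg_of_posSemidef {A D : Matrix S S ℂ} (hA : A.PosSemidef)
    (hD : D.PosSemidef) : 0 ≤ (A * D).trace := by
  have h := (hD.conjTranspose_mul_mul_same (psdSqrt A)).trace_nonneg
  rwa [(psdSqrt_posSemidef hA).1.eq, trace_mul_comm, ← Matrix.mul_assoc,
    psdSqrt_mul_self hA] at h

theorem posSemidef_one_sub_of_isHermitian_of_idempotent {E : Matrix S S ℂ} (hE : E.IsHermitian)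
    (hEE : E * E = E) : (1 - E).PosSemidef := by
  have h := posSemidef_conjTranspose_mul_self (1 - E)
  rwa [conjTranspose_sub, conjTranspose_one, hE.eq, Matrix.mul_sub, Matrix.sub_mul,
    Matrix.sub_mul, hEE, Matrix.mul_one, Matrix.one_mul, Matrix.mul_one, sub_self, sub_zero] at h

/-- If `N Nᴴ ≤ A²` with `A` positive semidefinite, then `Re Tr N ≤ Tr A`. -/
theorem re_trace_le_of_mul_conjTranspose_le_sq {A N : Matrix S S ℂ} (hA : A.PosSemidef)
    (h : (A * A - N * Nᴴ).PosSemidef) : N.trace.re ≤ A.trace.re := by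
  obtain ⟨J, hJ, hcomm, hAJA, -⟩ := exists_posSemidef_pseudoinverse hA
  have hsupp : A * J * N = N := by
    have hZ : ((1 - A * J) * N) * ((1 - A * J) * N)ᴴ
        + (1 - A * J) * (A * A - N * Nᴴ) * (1 - A * J)ᴴ = 0 := by
      rw [conjTranspose_mul]
      have h0 : (1 - A * J) * A = 0 := by rw [Matrix.sub_mul, hAJA, Matrix.one_mul, sub_self]
      calc _ = ((1 - A * J) * A) * A * (1 - A * J)ᴴ := by noncomm_ring
        _ = 0 := by rw [h0]; simp
    have h1 := (posSemidef_self_mul_conjTranspose ((1 - A * J) * N)).trace_nonneg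
    have h2 := (h.mul_mul_conjTranspose_same (1 - A * J)).trace_nonneg
    have h3 := congrArg trace hZ
    rw [trace_add, trace_zero] at h3
    have h4 := trace_mul_conjTranspose_self_eq_zero_iff.1
      ((add_eq_zero_iff_of_nonneg h1 h2).1 h3).1
    rw [Matrix.sub_mul, Matrix.one_mul, sub_eq_zero] at h4
    exact h4.symm
  have h1 := (hJ.conjTranspose_mul_mul_same (N - A)).trace_nonneg
  have h2 := trace_mul_nonneg_of_posSemidef hJ h
  have h3 : (N - A)ᴴ * J * (N - A) = Nᴴ * J * N - (A * J * N)ᴴ - A * J * N + A * J * A := by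
    rw [conjTranspose_sub, conjTranspose_mul, conjTranspose_mul, hA.1.eq, hJ.1.eq]
    noncomm_ring
  rw [h3, hsupp, hAJA, trace_add, trace_sub, trace_sub, trace_conjTranspose, trace_mul_comm,
    ← Matrix.mul_assoc] at h1
  have h4 : (J * (A * A - N * Nᴴ)).trace = A.trace - (N * Nᴴ * J).trace := by
    rw [Matrix.mul_sub, trace_sub, ← Matrix.mul_assoc, hcomm, hAJA, trace_mul_comm J]
  rw [h4] at h2
  have h1' := (Complex.le_def.1 h1).1
  have h2' := (Complex.le_def.1 h2).1
  simp only [Complex.zero_re, Complex.add_re, Complex.sub_re, Complex.star_def,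
    Complex.conj_re] at h1' h2'
  linarith

/-- If `T σ Tᴴ ≤ ρ`, then `Re Tr (T σ) ≤ F(ρ, σ)`. -/
theorem re_trace_mul_le_fidelity {ρ σ T : Matrix S S ℂ} (hρ : ρ.PosSemidef) (hσ : σ.PosSemidef)
    (h : (ρ - T * σ * Tᴴ).PosSemidef) : (T * σ).trace.re ≤ fidelity ρ σ := by
  have hs := psdSqrt_posSemidef hσ
  have hss := psdSqrt_mul_self hσ
  have hM : (psdSqrt σ * ρ * psdSqrt σ).PosSemidef := by
    simpa only [hs.1.eq] using hρ.mul_mul_conjTranspose_same (psdSqrt σ)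
  have key : (psdSqrt σ * T * psdSqrt σ).trace.re ≤ fidelity ρ σ := by
    refine re_trace_le_of_mul_conjTranspose_le_sq (psdSqrt_posSemidef hM) ?_
    rw [psdSqrt_mul_self hM]
    convert h.mul_mul_conjTranspose_same (psdSqrt σ) using 1
    simp only [conjTranspose_mul, hs.1.eq]
    generalize psdSqrt σ = s at hss
    subst hss
    noncomm_ring
  rwa [Matrix.mul_assoc, trace_mul_comm, Matrix.mul_assoc, hss] at key

/-- For positive semidefinite `ρ` and `σ`, some `T` with `T σ Tᴴ ≤ ρ` attains the fidelity as
`Tr (T σ)`. -/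
theorem exists_re_trace_mul_eq_fidelity {ρ σ : Matrix S S ℂ} (hρ : ρ.PosSemidef)
    (hσ : σ.PosSemidef) :
    ∃ T : Matrix S S ℂ, (ρ - T * σ * Tᴴ).PosSemidef ∧ (T * σ).trace.re = fidelity ρ σ := by
  have hs := psdSqrt_posSemidef hσ
  have hss := psdSqrt_mul_self hσ
  have hr := psdSqrt_posSemidef hρ
  have hrr := psdSqrt_mul_self hρ
  have hM : (psdSqrt σ * ρ * psdSqrt σ).PosSemidef := by
    simpa only [hs.1.eq] using hρ.mul_mul_conjTranspose_same (psdSqrt σ)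
  have hA := psdSqrt_posSemidef hM
  have hAA := psdSqrt_mul_self hM
  obtain ⟨Q, hQ, hQs, hsQs, -⟩ := exists_posSemidef_pseudoinverse hs
  obtain ⟨J, hJ, hJA, hAJA, hJAJ⟩ := exists_posSemidef_pseudoinverse hA
  have hfid : fidelity ρ σ = (psdSqrt (psdSqrt σ * ρ * psdSqrt σ)).trace.re := rfl
  rw [hfid]
  generalize psdSqrt (psdSqrt σ * ρ * psdSqrt σ) = A at *
  generalize psdSqrt σ = s at *
  generalize psdSqrt ρ = r at *
  subst hss hrr
  refine ⟨r * r * s * J * Q, ?_, ?_⟩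
  · have hP : (1 - s * Q).PosSemidef := by
      refine posSemidef_one_sub_of_isHermitian_of_idempotent ?_ ?_
      · rw [IsHermitian, conjTranspose_mul, hs.1.eq, hQ.1.eq, hQs]
      · rw [← Matrix.mul_assoc, hsQs]
    have hW : (1 - r * s * J * (r * s * J)ᴴ).PosSemidef := by
      refine posSemidef_one_sub_of_isHermitian_of_idempotent
        (isHermitian_mul_conjTranspose_self _) ?_
      simp only [conjTranspose_mul, hr.1.eq, hs.1.eq, hJ.1.eq]
      calc _ = r * s * J * J * (s * (r * r) * s) * J * (J * s * r) := by noncomm_ring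
        _ = r * s * (J * (J * A) * (A * J) * J) * (s * r) := by rw [← hAA]; noncomm_ring
        _ = r * s * (J * (A * J) * (J * A) * J) * (s * r) := by rw [hJA]
        _ = r * s * (J * A * J) * (J * A * J) * (s * r) := by noncomm_ring
        _ = _ := by rw [hJAJ]; noncomm_ring
    convert (hW.mul_mul_conjTranspose_same r).add
      (hP.mul_mul_conjTranspose_same (r * r * s * J)) using 1
    simp only [conjTranspose_mul, hr.1.eq, hs.1.eq, hJ.1.eq, hQ.1.eq]
    have h1 : Q * s * (s * Q) = s * Q := by rw [hQs, ← Matrix.mul_assoc, hsQs]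
    calc _ = r * r - r * r * s * J * (Q * s * (s * Q)) * (J * (s * (r * r))) := by noncomm_ring
      _ = _ := by rw [h1]; noncomm_ring
  · have h1 : Q * (s * s) = s := by rw [← Matrix.mul_assoc, hQs, hsQs]
    rw [Matrix.mul_assoc _ Q, h1, Matrix.mul_assoc, trace_mul_comm, ← hAJA, hJA.symm,
      Matrix.mul_assoc J A A, hAA]
    congr 2
    noncomm_ring

end SquareRoot

section Marginal

variable {X B : Type*} [Fintype X] [Fintype B]

theorem margB_eq_sum_submatrix (M : Matrix (X × B) (X × B) ℂ) :
    margB M = ∑ a, M.submatrix (Prod.mk a) (Prod.mk a) := by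
  ext b b'
  simp [margB, Matrix.sum_apply]

theorem margB_posSemidef {M : Matrix (X × B) (X × B) ℂ} (hM : M.PosSemidef) :
    (margB M).PosSemidef := by
  rw [margB_eq_sum_submatrix]
  exact posSemidef_sum _ fun a _ => hM.submatrix _

theorem margB_add (M N : Matrix (X × B) (X × B) ℂ) : margB (M + N) = margB M + margB N := by
  ext b b'
  simp [margB, Finset.sum_add_distrib]

theorem trace_margB (M : Matrix (X × B) (X × B) ℂ) : (margB M).trace = M.trace := by
  simp only [margB, trace, diag_apply, of_apply, Fintype.sum_prod_type]
  exact Finset.sum_comm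

theorem margB_kronecker (ψ : Matrix X X ℂ) (R : Matrix B B ℂ) :
    margB (ψ ⊗ₖ R) = ψ.trace • R := by
  ext b b'
  simp [margB, trace, Finset.sum_mul]

theorem margB_one_kronecker_mul [DecidableEq X] (T : Matrix B B ℂ)
    (M : Matrix (X × B) (X × B) ℂ) : margB ((1 ⊗ₖ T) * M) = T * margB M := by
  ext b b'
  simp only [margB, of_apply, mul_apply, kroneckerMap_apply, Fintype.sum_prod_type, one_apply,
    ite_mul, one_mul, zero_mul, Finset.sum_ite_irrel, Finset.sum_const_zero,
    Finset.sum_ite_eq, Finset.mem_univ, if_true, Finset.mul_sum]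
  exact Finset.sum_comm

theorem margB_mul_one_kronecker [DecidableEq X] (T : Matrix B B ℂ)
    (M : Matrix (X × B) (X × B) ℂ) : margB (M * (1 ⊗ₖ T)) = margB M * T := by
  ext b b'
  simp only [margB, of_apply, mul_apply, kroneckerMap_apply, Fintype.sum_prod_type, one_apply,
    ite_mul, mul_ite, one_mul, zero_mul, mul_zero, Finset.sum_ite_irrel, Finset.sum_const_zero,
    Finset.sum_ite_eq', Finset.mem_univ, if_true, Finset.sum_mul]
  exact Finset.sum_comm

end Marginal

/-- **Unsmoothed substate perturbation** (construction step in the proof of the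
Substate Perturbation Lemma). -/
theorem unsmoothed_substate_perturbation
    {X B : Type*} [Fintype X] [DecidableEq X] [Nonempty X]
    [Fintype B] [DecidableEq B] [Nonempty B]
    (σXB : Matrix (X × B) (X × B) ℂ) (ψX : Matrix X X ℂ) (K : ℝ)
    (hσ : IsState σXB) (hψ : IsState ψX) (hK : 0 < K)
    (hsub : (K • (ψX ⊗ₖ margB σXB) - σXB).PosSemidef) :
    ∀ ρB : Matrix B B ℂ, IsState ρB →
      ∃ ρ'XB : Matrix (X × B) (X × B) ℂ, IsState ρ'XB ∧
        margB ρ'XB = ρB ∧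
        fidelity ρ'XB σXB ≥ fidelity ρB (margB σXB) ∧
        ((2 * K) • (ψX ⊗ₖ ρB) - ρ'XB).PosSemidef := by
  intro ρB hρ
  have hσB := margB_posSemidef hσ.1
  have hK1 : 1 ≤ K := by
    have h := (Complex.le_def.1 hsub.trace_nonneg).1
    simpa [trace_sub, trace_smul, trace_kronecker, trace_margB, hσ.2, hψ.2] using h
  obtain ⟨T, hR, hT⟩ := exists_re_trace_mul_eq_fidelity hρ.1 hσB
  set R := ρB - T * margB σXB * Tᴴ with hRdef
  set V : Matrix (X × B) (X × B) ℂ := 1 ⊗ₖ T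
  have hVH : Vᴴ = 1 ⊗ₖ Tᴴ := by rw [conjTranspose_kronecker, conjTranspose_one]
  have hψR := hψ.1.kronecker hR
  have hpos : (V * σXB * Vᴴ + ψX ⊗ₖ R).PosSemidef :=
    (hσ.1.mul_mul_conjTranspose_same V).add hψR
  have hmarg : margB (V * σXB * Vᴴ + ψX ⊗ₖ R) = ρB := by
    rw [margB_add, hVH, margB_mul_one_kronecker, margB_one_kronecker_mul, margB_kronecker, hψ.2,
      one_smul, hRdef, add_sub_cancel]
  refine ⟨V * σXB * Vᴴ + ψX ⊗ₖ R, ⟨hpos, ?_⟩, hmarg, ?_, ?_⟩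
  · rw [← trace_margB, hmarg, hρ.2]
  · rw [ge_iff_le, ← hT, ← margB_one_kronecker_mul, trace_margB]
    exact re_trace_mul_le_fidelity hpos hσ.1 (by rwa [add_sub_cancel_left])
  · have hVψ : V * (ψX ⊗ₖ margB σXB) * Vᴴ = ψX ⊗ₖ ρB - ψX ⊗ₖ R := by
      rw [hVH, ← mul_kronecker_mul, ← mul_kronecker_mul, Matrix.one_mul, Matrix.mul_one,
        eq_sub_iff_add_eq, ← kronecker_add, hRdef, add_sub_cancel]
    have h1 : (K • (ψX ⊗ₖ ρB)).PosSemidef := (hψ.1.kronecker hρ.1).smul hK.le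
    have h2 : ((K - 1) • (ψX ⊗ₖ R)).PosSemidef := hψR.smul (sub_nonneg.2 hK1)
    convert ((hsub.mul_mul_conjTranspose_same V).add h1).add h2 using 1
    rw [Matrix.mul_sub, Matrix.sub_mul, Matrix.mul_smul, Matrix.smul_mul, hVψ]
    module

end
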